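/- The number of intervals in the Tamari lattice on binary trees with n nodes equals 2(4n+1)! / ((n+1)!(3n+2)!). -/

import Mathlib

/-- Unlabelled binary trees. -/
inductive Tree0 where
  | leaf : Tree0
  | node : Tree0 → Tree0 → Tree0
deriving DecidableEq

namespace Tree0

/-- Number of nodes. -/
def size : Tree0 → ℕ
  | leaf => 0
  | node l r => size l + size r + 1

/-- One right rotation somewhere in the tree: `y(x(A,B),C) ↦ x(A,y(B,C))`. -/
inductive Rot : Tree0 → Tree0 → Prop
  | root (A B C : Tree0) : Rot (node (node A B) C) (node A (node B C))
  | left {l l' : Tree0} (r : Tree0) : Rot l l' → Rot (node l r) (node l' r)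
  | right (l : Tree0) {r r' : Tree0} : Rot r r' → Rot (node l r) (node l r')

/-- The Tamari order: transitive closure of right rotation. -/
def tamariLE : Tree0 → Tree0 → Prop := Relation.ReflTransGen Rot

end Tree0

namespace Tree0

/-- Number of nodes on the left spine. -/
def spine : Tree0 → ℕ
  | leaf => 0
  | node l _ => spine l + 1

/-- `graft c b` replaces the leftmost leaf of `c` by `b`. -/
def graft : Tree0 → Tree0 → Tree0
  | leaf, b => b
  | node l r, b => node (graft l b) r

/-- The part of a tree above the `s`-th edge of its left spine. -/
def top : ℕ → Tree0 → Tree0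
  | 0, _ => leaf
  | _ + 1, leaf => leaf
  | s + 1, node l r => node (top s l) r

/-- The part of a tree below the `s`-th edge of its left spine. -/
def bot : ℕ → Tree0 → Tree0
  | 0, c => c
  | _ + 1, leaf => leaf
  | s + 1, node l _ => bot s l

theorem graft_top_bot (s : ℕ) (c : Tree0) : graft (top s c) (bot s c) = c := by
  induction s generalizing c with
  | zero => rfl
  | succ s ih => cases c <;> simp [top, bot, graft, ih]

theorem spine_top {s : ℕ} {c : Tree0} (h : s ≤ spine c) : spine (top s c) = s := by
  induction s generalizing c with
  | zero => rfl
  | succ s ih =>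
    cases c with
    | leaf => simp [spine] at h
    | node l r => simp only [spine, top] at h ⊢; rw [ih (by omega)]

theorem top_spine_graft (c b : Tree0) : top (spine c) (graft c b) = c := by
  induction c with
  | leaf => rfl
  | node l r ihl _ => simp [spine, graft, top, ihl]

theorem bot_spine_graft (c b : Tree0) : bot (spine c) (graft c b) = b := by
  induction c with
  | leaf => rfl
  | node l r ihl _ => simp [spine, graft, bot, ihl]

theorem spine_graft (c b : Tree0) : spine (graft c b) = spine c + spine b := by
  induction c with
  | leaf => simp [spine, graft]
  | node l r ihl _ => simp only [spine, graft, ihl]; omega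

theorem size_graft (c b : Tree0) : size (graft c b) = size c + size b := by
  induction c with
  | leaf => simp [size, graft]
  | node l r ihl _ => simp only [size, graft, ihl]; omega

theorem graft_node_injective {c a b c' a' b' : Tree0}
    (h : graft c (node a b) = graft c' (node a' b')) (ha : a.size = a'.size) :
    c = c' ∧ a = a' ∧ b = b' := by
  induction c generalizing c' with
  | leaf =>
    cases c' with
    | leaf => simpa [graft] using h
    | node d e =>
      simp only [graft, node.injEq] at h
      have := congrArg size h.1
      simp only [size_graft, size] at this
      omega
  | node l r ihl _ =>
    cases c' with
    | leaf =>
      simp only [graft, node.injEq] at h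
      have := congrArg size h.1
      simp only [size_graft, size] at this
      omega
    | node d e =>
      simp only [graft, node.injEq] at h
      obtain ⟨h1, h2, h3⟩ := ihl h.1
      exact ⟨by rw [h1, h.2], h2, h3⟩

theorem Rot.size_eq {S T : Tree0} (h : Rot S T) : S.size = T.size := by
  induction h with
  | root A B C => simp only [size]; omega
  | left r _ ih => simp only [size, ih]
  | right l _ ih => simp only [size, ih]

theorem tamariLE.size_eq {S T : Tree0} (h : tamariLE S T) : S.size = T.size := by
  induction h with
  | refl => rfl
  | tail _ h ih => rw [ih, h.size_eq]

theorem tamariLE.node_left {l l' : Tree0} (h : tamariLE l l') (r : Tree0) :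
    tamariLE (node l r) (node l' r) :=
  Relation.ReflTransGen.lift (fun t => node t r) (fun _ _ => Rot.left r) _ _ h

theorem tamariLE.node_right {r r' : Tree0} (l : Tree0) (h : tamariLE r r') :
    tamariLE (node l r) (node l r') :=
  Relation.ReflTransGen.lift (fun t => node l t) (fun _ _ => Rot.right l) _ _ h

theorem tamariLE.graft {b b' : Tree0} (c : Tree0) (h : tamariLE b b') :
    tamariLE (graft c b) (graft c b') := by
  induction c with
  | leaf => exact h
  | node l r ihl _ => exact ihl.node_left r

theorem graft_node_tamariLE (c a b : Tree0) :
    tamariLE (graft c (node a b)) (node a (graft c b)) := by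
  induction c with
  | leaf => exact Relation.ReflTransGen.refl
  | node l r ihl _ => exact (ihl.node_left r).tail (Rot.root _ _ _)

theorem Rot.exists_graft {T a b c : Tree0} (h : Rot T (graft c (node a b))) :
    ∃ a' b' c', T = graft c' (node a' b') ∧ tamariLE a' a ∧
      tamariLE (graft c' b') (graft c b) := by
  induction c generalizing T with
  | leaf =>
    simp only [graft] at h
    cases h with
    | root _ B C => exact ⟨a, B, node leaf C, rfl, .refl, .refl⟩
    | left _ h => exact ⟨_, b, leaf, rfl, .single h, .refl⟩
    | right _ h => exact ⟨a, _, leaf, rfl, .refl, .single h⟩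
  | node d e ihd _ =>
    simp only [graft] at h
    generalize hg : graft d (node a b) = g at h
    cases h with
    | root _ B C =>
      subst hg
      exact ⟨a, b, node (node d B) C, rfl, .refl, .single (Rot.root _ _ _)⟩
    | left _ h =>
      subst hg
      obtain ⟨a', b', c', rfl, h1, h2⟩ := ihd h
      exact ⟨a', b', node c' e, rfl, h1, h2.node_left e⟩
    | right _ h =>
      subst hg
      exact ⟨a, b, node d _, rfl, .refl, .single (Rot.right _ h)⟩

theorem tamariLE_node_iff {T l r : Tree0} : tamariLE T (node l r) ↔
    ∃ a b c, T = graft c (node a b) ∧ tamariLE a l ∧ tamariLE (graft c b) r := by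
  constructor
  · intro h
    induction h using Relation.ReflTransGen.head_induction_on with
    | refl => exact ⟨l, r, leaf, rfl, .refl, .refl⟩
    | head h _ ih =>
      obtain ⟨a, b, c, rfl, h1, h2⟩ := ih
      obtain ⟨a', b', c', rfl, h3, h4⟩ := h.exists_graft
      exact ⟨a', b', c', rfl, h3.trans h1, h4.trans h2⟩
  · rintro ⟨a, b, c, rfl, h1, h2⟩
    exact ((graft_node_tamariLE c a b).trans (h1.node_left _)).trans (h2.node_right _)

theorem finite_size_le (n : ℕ) : {t : Tree0 | t.size ≤ n}.Finite := by
  induction n with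
  | zero =>
    refine (Set.finite_singleton leaf).subset fun t ht => ?_
    cases t with
    | leaf => rfl
    | node l r => simp [size] at ht
  | succ n ih =>
    refine ((Set.finite_singleton leaf).union (ih.image2 node ih)).subset fun t ht => ?_
    cases t with
    | leaf => exact Or.inl rfl
    | node l r =>
      simp only [size, Set.mem_ofPred_eq] at ht
      exact Or.inr ⟨l, by simp only [Set.mem_ofPred_eq]; omega, r,
        by simp only [Set.mem_ofPred_eq]; omega, rfl⟩

theorem finite_intervals (n : ℕ) :
    {p : Tree0 × Tree0 | p.1.size = n ∧ p.2.size = n ∧ tamariLE p.1 p.2}.Finite :=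
  ((finite_size_le n).prod (finite_size_le n)).subset fun _ hp => ⟨hp.1.le, hp.2.1.le⟩

/-- The Tamari intervals of size `n`. -/
noncomputable def intervals (n : ℕ) : Finset (Tree0 × Tree0) := (finite_intervals n).toFinset

theorem mem_intervals {n : ℕ} {p : Tree0 × Tree0} :
    p ∈ intervals n ↔ p.2.size = n ∧ tamariLE p.1 p.2 := by
  simp only [intervals, Set.Finite.mem_toFinset, Set.mem_ofPred_eq]
  exact ⟨fun h => h.2, fun h => ⟨h.2.size_eq.trans h.1, h⟩⟩

open Polynomial Finset

/-- Generating polynomial of the intervals of size `n`, by left spine of the lower tree. -/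
noncomputable def spinePoly (n : ℕ) : ℚ[X] := ∑ p ∈ intervals n, X ^ (spine p.1 + 1)

theorem spinePoly_zero : spinePoly 0 = X := by
  have : intervals 0 = {(leaf, leaf)} := by
    ext ⟨S, T⟩
    simp only [mem_intervals, mem_singleton, Prod.mk.injEq]
    constructor
    · rintro ⟨h1, h2⟩
      have h3 := h2.size_eq.trans h1
      constructor
      · cases S <;> simp_all [size]
      · cases T <;> simp_all [size]
    · rintro ⟨rfl, rfl⟩
      exact ⟨rfl, .refl⟩
  simp [spinePoly, this, spine]

theorem spinePoly_succ_eq_sum (n : ℕ) :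
    spinePoly (n + 1) = ∑ ij ∈ antidiagonal n, ∑ p ∈ intervals ij.1, ∑ q ∈ intervals ij.2,
      ∑ s ∈ range (spine q.1 + 1), X ^ (spine p.1 + s + 2) := by
  simp_rw [spinePoly, sum_sigma']
  symm
  refine sum_bij (fun z _ => (graft (top z.2.2.2 z.2.2.1.1)
    (node z.2.1.1 (bot z.2.2.2 z.2.2.1.1)), node z.2.1.2 z.2.2.1.2)) ?_ ?_ ?_ ?_
  · rintro ⟨⟨i, j⟩, ⟨a, l⟩, ⟨c, r⟩, s⟩ hz
    simp only [mem_sigma, HasAntidiagonal.mem_antidiagonal, mem_intervals, mem_range] at hz ⊢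
    obtain ⟨h0, ⟨h1, h2⟩, ⟨h3, h4⟩, h5⟩ := hz
    refine ⟨by simp only [size]; omega, tamariLE_node_iff.2 ⟨_, _, _, rfl, h2, ?_⟩⟩
    rwa [graft_top_bot]
  · rintro ⟨⟨i, j⟩, ⟨a, l⟩, ⟨c, r⟩, s⟩ hz ⟨⟨i', j'⟩, ⟨a', l'⟩, ⟨c', r'⟩, s'⟩ hz' h
    simp only [mem_sigma, HasAntidiagonal.mem_antidiagonal, mem_intervals, mem_range] at hz hz'
    obtain ⟨h0, ⟨h1, h2⟩, ⟨h3, h4⟩, h5⟩ := hz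
    obtain ⟨h0', ⟨h1', h2'⟩, ⟨h3', h4'⟩, h5'⟩ := hz'
    simp only [Prod.mk.injEq, node.injEq] at h
    obtain ⟨hg, rfl, rfl⟩ := h
    obtain ⟨ht, rfl, hb⟩ := graft_node_injective hg (h2.size_eq.trans h2'.size_eq.symm)
    have hc : c = c' := by rw [← graft_top_bot s c, ht, hb, graft_top_bot]
    have hs : s = s' := by
      rw [← spine_top (Nat.lt_succ_iff.1 h5), ht, spine_top (Nat.lt_succ_iff.1 h5')]
    subst hc hs h1 h3 h1' h3'
    rfl
  · rintro ⟨S, T⟩ hp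
    rw [mem_intervals] at hp
    obtain ⟨h1, h2⟩ := hp
    cases T with
    | leaf => simp [size] at h1
    | node l r =>
      obtain ⟨a, b, c, rfl, h3, h4⟩ := tamariLE_node_iff.1 h2
      refine ⟨⟨(l.size, r.size), (a, l), (graft c b, r), spine c⟩, ?_, ?_⟩
      · simp only [mem_sigma, HasAntidiagonal.mem_antidiagonal, mem_intervals, mem_range, spine_graft]
        simp only [size] at h1
        exact ⟨by omega, ⟨by trivial, h3⟩, ⟨by trivial, h4⟩, by omega⟩
      · simp only [top_spine_graft, bot_spine_graft]
  · rintro ⟨⟨i, j⟩, ⟨a, l⟩, ⟨c, r⟩, s⟩ hz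
    simp only [mem_sigma, mem_range] at hz
    simp only [spine_graft, spine, spine_top (Nat.lt_succ_iff.1 hz.2.2.2)]
    congr 1
    omega

theorem eval_one_spinePoly (n : ℕ) : (spinePoly n).eval 1 = (intervals n).card := by
  simp [spinePoly, eval_finsetSum]

theorem spinePoly_succ (n : ℕ) :
    (X - 1) * spinePoly (n + 1) = X * ∑ ij ∈ antidiagonal n,
      spinePoly ij.1 * (spinePoly ij.2 - C ((spinePoly ij.2).eval 1)) := by
  rw [spinePoly_succ_eq_sum, mul_sum, mul_sum]
  refine sum_congr rfl fun ij _ => ?_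
  have h : spinePoly ij.2 - C ((spinePoly ij.2).eval 1) =
      ∑ q ∈ intervals ij.2, (X - 1) * ∑ s ∈ range (spine q.1 + 1), X ^ s := by
    simp_rw [mul_geom_sum, sum_sub_distrib, eval_one_spinePoly]
    simp [spinePoly]
  rw [h, spinePoly, sum_mul, mul_sum, mul_sum]
  refine sum_congr rfl fun p _ => ?_
  simp_rw [mul_sum]
  refine sum_congr rfl fun q _ => sum_congr rfl fun s _ => ?_
  ring

end Tree0

open Polynomial in
/-- Truncations of a solution of the catalytic equation satisfy it up to high order in `t`. -/
theorem pow_dvd_catalytic_equation {R : Type*} [CommRing R] {x : R} (t : R) {s s₁ : ℕ → R}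
    (h0 : s 0 = x)
    (hs : ∀ n, (x - 1) * s (n + 1) =
      x * ∑ ij ∈ Finset.HasAntidiagonal.antidiagonal n, s ij.1 * (s ij.2 - s₁ ij.2)) (N : ℕ) :
    t ^ N ∣ (x - 1) * (∑ n ∈ Finset.range N, s n * t ^ n) - x * (x - 1) -
      x * t * ((∑ n ∈ Finset.range N, s n * t ^ n) *
        ((∑ n ∈ Finset.range N, s n * t ^ n) - ∑ n ∈ Finset.range N, s₁ n * t ^ n)) := by
  have hcoeff : ∀ (f : ℕ → R) {d : ℕ}, d < N →
      (∑ n ∈ Finset.range N, C (f n) * X ^ n).coeff d = f d := by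
    intro f d hd
    simp [finsetSum_coeff, coeff_C_mul, coeff_X_pow, hd]
  have key : (X : R[X]) ^ N ∣ C (x - 1) * (∑ n ∈ Finset.range N, C (s n) * X ^ n) -
      C (x * (x - 1)) - C x * (X * ((∑ n ∈ Finset.range N, C (s n) * X ^ n) *
        ((∑ n ∈ Finset.range N, C (s n) * X ^ n) - ∑ n ∈ Finset.range N, C (s₁ n) * X ^ n))) := by
    rw [X_pow_dvd_iff]
    intro d hd
    rw [coeff_sub, coeff_sub, coeff_C_mul, coeff_C_mul, hcoeff s hd]
    cases d with
    | zero => rw [coeff_X_mul_zero, coeff_C_zero, h0]; ring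
    | succ d =>
      rw [coeff_X_mul, coeff_C_succ, coeff_mul, hs, sub_zero, sub_eq_zero]
      congr 1
      refine Finset.sum_congr rfl fun ij hij => ?_
      rw [Finset.HasAntidiagonal.mem_antidiagonal] at hij
      rw [coeff_sub, hcoeff s (by omega), hcoeff s (by omega), hcoeff s₁ (by omega)]
  have h := map_dvd (evalRingHom t) key
  simpa [eval_finsetSum, mul_assoc] using h

/-- A rational parametrization of the catalytic equation. -/
theorem catalytic_equation_of_parametrization {R : Type*} [CommRing R] {z u v w : R}
    (hv : (1 + z * u) * v = 1) (hw : (1 - z) * w = 1) :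
    ((1 + u) * v ^ 2 - 1) * ((1 + u) * (1 - 2 * z - z ^ 2 * u) * v * w ^ 3 - (1 + u) * v ^ 2) =
      (1 + u) * v ^ 2 * (z * (1 - z) ^ 3) * ((1 + u) * (1 - 2 * z - z ^ 2 * u) * v * w ^ 3 *
        ((1 + u) * (1 - 2 * z - z ^ 2 * u) * v * w ^ 3 - (1 - 2 * z) * w ^ 3)) := by
  have hw3 : (1 - z) ^ 3 * w ^ 3 = 1 := by rw [← mul_pow, hw, one_pow]
  have h1 : (1 + u) * v ^ 2 - 1 = u * (1 - 2 * z - z ^ 2 * u) * v ^ 2 := by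
    linear_combination (1 + (1 + z * u) * v) * hv
  have h2 : (1 + u) * (1 - 2 * z - z ^ 2 * u) * v * w ^ 3 - (1 + u) * v ^ 2 =
      (1 + u) * ((1 - 2 * z - z ^ 2 * u) * (1 + z * u) - (1 - z) ^ 3) * v ^ 2 * w ^ 3 := by
    linear_combination (1 + u) * v ^ 2 * hw3 -
      (1 + u) * (1 - 2 * z - z ^ 2 * u) * v * w ^ 3 * hv
  have h3 : (1 + u) * (1 - 2 * z - z ^ 2 * u) * v * w ^ 3 - (1 - 2 * z) * w ^ 3 =
      u * (1 - 3 * z + z ^ 2 - z ^ 2 * u) * v * w ^ 3 := by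
    linear_combination (1 - 2 * z) * w ^ 3 * hv
  rw [h1, h2, h3]
  linear_combination -(1 + u) ^ 2 * v ^ 4 * z * (1 - 2 * z - z ^ 2 * u) * u *
    (1 - 3 * z + z ^ 2 - z ^ 2 * u) * w ^ 3 * hw3

/-- Solutions of the catalytic equation are unique `z`-adically. -/
theorem pow_dvd_sub_of_catalytic_equation {R : Type*} [CommRing R] [IsDomain R] {σ : R →+* R}
    {x z t S G : R} {N : ℕ} (hz : Prime z) (ht : z ∣ t) (hx : ¬ z ∣ x - 1) (hσ : σ z = z)
    (hG : (x - 1) * (G - x) = x * t * (G * (G - σ G)))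
    (hS : t ^ N ∣ (x - 1) * S - x * (x - 1) - x * t * (S * (S - σ S))) :
    z ^ N ∣ S - G := by
  suffices ∀ k ≤ N, z ^ k ∣ S - G from this N le_rfl
  intro k hk
  induction k with
  | zero => simp
  | succ k ih =>
    have hD := ih (by omega)
    have hσD : z ^ k ∣ σ S - σ G := by simpa [hσ] using map_dvd σ hD
    refine hz.pow_dvd_of_dvd_mul_left _ hx ?_
    have h1 : z ^ (k + 1) ∣
        t * ((S - G) * (x * (S - σ S)) + ((S - G) - (σ S - σ G)) * (x * G)) := by
      rw [pow_succ']
      exact mul_dvd_mul ht (dvd_add (hD.mul_right _) ((dvd_sub hD hσD).mul_right _))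
    have h2 := ((pow_dvd_pow z hk).trans (pow_dvd_pow_of_dvd ht N)).trans hS
    convert dvd_add h1 h2 using 1
    linear_combination -hG

open PowerSeries in
theorem PowerSeries.coeff_X_pow_mul_one_sub_X_pow {n N : ℕ} (h : n ≤ N) (m : ℕ) :
    coeff N ((X : ℚ⟦X⟧) ^ n * (1 - X) ^ m) = (-1) ^ (N - n) * (m.choose (N - n) : ℚ) := by
  obtain ⟨k, rfl⟩ := Nat.exists_eq_add_of_le' h
  rw [coeff_X_pow_mul, Nat.add_sub_cancel, sub_eq_neg_add, add_pow, map_sum]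
  have hterm : ∀ i, coeff k ((-X : ℚ⟦X⟧) ^ i * 1 ^ (m - i) * (m.choose i : ℚ⟦X⟧)) =
      if k = i then (-1) ^ i * (m.choose i : ℚ) else 0 := by
    intro i
    have : (-X : ℚ⟦X⟧) ^ i * 1 ^ (m - i) * (m.choose i : ℚ⟦X⟧) =
        C ((-1) ^ i * (m.choose i : ℚ)) * X ^ i := by
      rw [neg_pow]; simp; ring
    rw [this, coeff_C_mul, coeff_X_pow]
    split_ifs <;> simp
  simp_rw [hterm, Finset.sum_ite_eq, Finset.mem_range]
  split_ifs with hk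
  · rfl
  · rw [Nat.choose_eq_zero_of_lt (by omega)]; simp

/-- Chapoton's number `2(4n+1)! / ((n+1)!(3n+2)!)`. -/
def chapoton (n : ℕ) : ℚ :=
  2 * (4 * n + 1).factorial / ((n + 1).factorial * (3 * n + 2).factorial)

theorem chapoton_mul_choose {n k : ℕ} (h : n ≤ k + 2) :
    chapoton n * ((3 * n + 3).choose (k + 2 - n) : ℚ) =
      6 / (k + 2).factorial * (((k + 2).choose n : ℚ) * ((4 * n + 1).descFactorial k : ℚ)) := by
  by_cases hk : k ≤ 4 * n + 1
  · have h1 := Nat.choose_mul_factorial_mul_factorial (n := 3 * n + 3) (k := k + 2 - n) (by omega)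
    have h2 := Nat.choose_mul_factorial_mul_factorial h
    have h3 := Nat.factorial_mul_descFactorial hk
    rw [show 3 * n + 3 - (k + 2 - n) = 4 * n + 1 - k by omega,
      Nat.factorial_succ (3 * n + 2)] at h1
    have p1 : ((4 * n + 1 - k).factorial : ℚ) ≠ 0 := by positivity
    have p2 : ((k + 2 - n).factorial : ℚ) ≠ 0 := by positivity
    have p3 : (n.factorial : ℚ) ≠ 0 := by positivity
    have p4 : ((3 * n + 2).factorial : ℚ) ≠ 0 := by positivity
    have e1 : ((3 * n + 3).choose (k + 2 - n) : ℚ) = (3 * n + 3) * (3 * n + 2).factorial /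
        ((k + 2 - n).factorial * (4 * n + 1 - k).factorial) := by
      rw [eq_div_iff (by positivity), ← mul_assoc]; exact_mod_cast h1
    have e2 : ((k + 2).choose n : ℚ) = (k + 2).factorial /
        (n.factorial * (k + 2 - n).factorial) := by
      rw [eq_div_iff (by positivity), ← mul_assoc]; exact_mod_cast h2
    have e3 : ((4 * n + 1).descFactorial k : ℚ) =
        (4 * n + 1).factorial / (4 * n + 1 - k).factorial := by
      rw [eq_div_iff p1, mul_comm]; exact_mod_cast h3
    rw [e1, e2, e3, chapoton, Nat.factorial_succ n]
    push_cast
    field_simp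
    ring
  · rw [Nat.choose_eq_zero_of_lt (by omega),
      Nat.descFactorial_eq_zero_iff_lt.2 (by omega : 4 * n + 1 < k)]
    simp

open Polynomial in
theorem sum_choose_mul_descFactorial (k : ℕ) :
    ∑ n ∈ Finset.range (k + 2 + 1), (-1 : ℚ) ^ (k + 2 - n) *
      (((k + 2).choose n : ℚ) * ((4 * n + 1).descFactorial k : ℚ)) = 0 := by
  have hdeg : ((descPochhammer ℚ k).comp (C 4 * X + C 1)).natDegree < k + 2 := by
    refine natDegree_comp_le.trans_lt ?_
    rw [descPochhammer_natDegree, natDegree_linear (by norm_num)]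
    omega
  have h := congrFun (Polynomial.fwdDiff_iter_eq_zero_of_degree_lt hdeg) 0
  rw [fwdDiff_iter_eq_sum_shift] at h
  refine Eq.trans ?_ h
  refine Finset.sum_congr rfl fun n _ => ?_
  rw [← descPochhammer_eval_eq_descFactorial]
  simp [eval_comp, mul_assoc]

open PowerSeries in
theorem sum_chapoton_mul_coeff (N : ℕ) :
    ∑ n ∈ Finset.range (N + 1), chapoton n * coeff N ((X : ℚ⟦X⟧) ^ n * (1 - X) ^ (3 * n + 3)) =
      coeff N (1 - 2 * X : ℚ⟦X⟧) := by
  have hsum : ∑ n ∈ Finset.range (N + 1),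
      chapoton n * coeff N ((X : ℚ⟦X⟧) ^ n * (1 - X) ^ (3 * n + 3)) =
      ∑ n ∈ Finset.range (N + 1),
        chapoton n * ((-1) ^ (N - n) * ((3 * n + 3).choose (N - n) : ℚ)) :=
    Finset.sum_congr rfl fun n hn => by
      rw [coeff_X_pow_mul_one_sub_X_pow (by simpa [Nat.lt_succ_iff] using hn)]
  have hright : coeff N (1 - 2 * X : ℚ⟦X⟧) =
      (if N = 0 then 1 else 0) - 2 * (if N = 1 then 1 else 0) := by
    rw [← map_ofNat (C (R := ℚ)) 2, map_sub, coeff_C_mul, coeff_one, coeff_X]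
  rw [hsum, hright]
  match N with
  | 0 => norm_num [chapoton, Nat.factorial]
  | 1 => norm_num [chapoton, Nat.factorial, Finset.sum_range_succ]
  | k + 2 =>
    trans 6 / ((k + 2).factorial : ℚ) * ∑ n ∈ Finset.range (k + 2 + 1), (-1 : ℚ) ^ (k + 2 - n) *
      (((k + 2).choose n : ℚ) * ((4 * n + 1).descFactorial k : ℚ))
    · rw [Finset.mul_sum]
      refine Finset.sum_congr rfl fun n hn => ?_
      rw [mul_left_comm, chapoton_mul_choose (by simpa [Nat.lt_succ_iff] using hn)]
      ring
    · rw [sum_choose_mul_descFactorial]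
      simp

open PowerSeries in
/-- The expansion of `(1 - 2z) / (1 - z) ^ 3` in powers of `z * (1 - z) ^ 3`
has Chapoton's numbers as coefficients. -/
theorem eq_chapoton_of_X_pow_dvd {a : ℕ → ℚ}
    (h : ∀ N, (X : ℚ⟦X⟧) ^ N ∣ ∑ n ∈ Finset.range N, C (a n) * (X ^ n * (1 - X) ^ (3 * n + 3)) -
      (1 - 2 * X)) (n : ℕ) : a n = chapoton n := by
  induction n using Nat.strong_induction_on with
  | _ n ih =>
    have h1 := X_pow_dvd_iff.1 (h (n + 1)) n (Nat.lt_succ_self n)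
    rw [map_sub, sub_eq_zero, ← sum_chapoton_mul_coeff, map_sum] at h1
    simp_rw [coeff_C_mul] at h1
    rw [Finset.sum_range_succ, Finset.sum_range_succ,
      Finset.sum_congr rfl fun m hm => by rw [ih m (Finset.mem_range.1 hm)]] at h1
    have h2 := add_left_cancel h1
    rw [coeff_X_pow_mul_one_sub_X_pow le_rfl] at h2
    simpa using h2

theorem map_aeval_of_map_eq_one {A B : Type*} [CommRing A] [CommRing B] [Algebra ℚ A]
    [Algebra ℚ B] (f : A →+* B) {x : A} (hx : f x = 1) (p : Polynomial ℚ) :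
    f (Polynomial.aeval x p) = algebraMap ℚ B (p.eval 1) := by
  rw [Polynomial.aeval_def, Polynomial.hom_eval₂, hx, ← map_one (algebraMap ℚ B),
    Subsingleton.elim (f.comp _) (algebraMap ℚ B), Polynomial.eval₂_at_apply]

namespace Tree0

theorem aeval_spinePoly_succ {R : Type*} [CommRing R] [Algebra ℚ R] (x : R) (n : ℕ) :
    (x - 1) * Polynomial.aeval x (spinePoly (n + 1)) =
      x * ∑ ij ∈ Finset.HasAntidiagonal.antidiagonal n, Polynomial.aeval x (spinePoly ij.1) *
        (Polynomial.aeval x (spinePoly ij.2) - algebraMap ℚ R ((spinePoly ij.2).eval 1)) := by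
  simpa using congrArg (Polynomial.aeval x) (spinePoly_succ n)

theorem pow_dvd_catalytic_equation_spinePoly {R : Type*} [CommRing R] [Algebra ℚ R] (x t : R)
    (N : ℕ) :
    t ^ N ∣ (x - 1) * (∑ n ∈ Finset.range N, Polynomial.aeval x (spinePoly n) * t ^ n) -
      x * (x - 1) - x * t * ((∑ n ∈ Finset.range N, Polynomial.aeval x (spinePoly n) * t ^ n) *
        ((∑ n ∈ Finset.range N, Polynomial.aeval x (spinePoly n) * t ^ n) -
          ∑ n ∈ Finset.range N, algebraMap ℚ R ((spinePoly n).eval 1) * t ^ n)) :=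
  pow_dvd_catalytic_equation (s := fun n => Polynomial.aeval x (spinePoly n))
    (s₁ := fun n => algebraMap ℚ R ((spinePoly n).eval 1)) t
    (by rw [spinePoly_zero, Polynomial.aeval_X]) (aeval_spinePoly_succ x) N

open PowerSeries in
theorem X_pow_dvd_sum_spinePoly (N : ℕ) :
    (X : ℚ⟦X⟧) ^ N ∣ ∑ n ∈ Finset.range N,
      C ((spinePoly n).eval 1) * (X ^ n * (1 - X) ^ (3 * n + 3)) - (1 - 2 * X) := by
  set z : (Polynomial ℚ)⟦X⟧ := X with hz
  set u : (Polynomial ℚ)⟦X⟧ := C Polynomial.X with hu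
  obtain ⟨v, hv⟩ : ∃ v, (1 + z * u) * v = 1 :=
    (isUnit_iff_constantCoeff.2 (by simp [hz])).exists_right_inv
  obtain ⟨w, hw⟩ : ∃ w, (1 - z) * w = 1 :=
    (isUnit_iff_constantCoeff.2 (by simp [hz])).exists_right_inv
  set π : (Polynomial ℚ)⟦X⟧ →+* ℚ⟦X⟧ := PowerSeries.map (Polynomial.evalRingHom 0) with hπ
  set ι : ℚ⟦X⟧ →+* (Polynomial ℚ)⟦X⟧ := PowerSeries.map Polynomial.C with hι
  have πz : π z = X := by simp [hπ, hz]
  have πu : π u = 0 := by simp [hπ, hu]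
  have ιX : ι X = z := by simp [hι, hz]
  have ιC : ∀ q, ι (C q) = algebraMap ℚ _ q := fun q =>
    RingHom.congr_fun (Subsingleton.elim (ι.comp C) (algebraMap ℚ _)) q
  have πv : π v = 1 := by simpa [πz, πu] using congrArg π hv
  have hπw : (1 - X) * π w = 1 := by simpa [πz] using congrArg π hw
  have ιπw : ι (π w) = w := by
    have h : (1 - z) * ι (π w) = 1 := by simpa [ιX] using congrArg ι hπw
    linear_combination w * h - ι (π w) * hw
  set t := z * (1 - z) ^ 3 with ht
  set x := (1 + u) * v ^ 2 with hx
  set G := (1 + u) * (1 - 2 * z - z ^ 2 * u) * v * w ^ 3 with hG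
  set G₁ := (1 - 2 * z) * w ^ 3 with hG₁
  have πx : π x = 1 := by simp [hx, πu, πv]
  have πt : π t = X * (1 - X) ^ 3 := by simp [ht, πz]
  have ιπG : ι (π G) = G₁ := by simp [hG, hG₁, πz, πu, πv, ιX, ιπw, map_ofNat]
  have Geq : (x - 1) * (G - x) = x * t * (G * (G - G₁)) :=
    catalytic_equation_of_parametrization hv hw
  have zx : ¬ z ∣ x - 1 := by
    rw [hz, X_dvd_iff]
    have : constantCoeff v = 1 := by simpa [hz] using congrArg constantCoeff hv
    simp [hx, this, hu, Polynomial.X_ne_zero]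
  set S := ∑ n ∈ Finset.range N, Polynomial.aeval x (spinePoly n) * t ^ n with hS
  set S₁ := ∑ n ∈ Finset.range N, algebraMap ℚ _ ((spinePoly n).eval 1) * t ^ n with hS₁
  have πS : π S = ∑ n ∈ Finset.range N,
      C ((spinePoly n).eval 1) * (X * (1 - X) ^ 3) ^ n := by
    simp [hS, πt, map_aeval_of_map_eq_one π πx]
  have ιπS : ι (π S) = S₁ := by simp [πS, hS₁, ιX, ιC, ht]
  have Seq := pow_dvd_catalytic_equation_spinePoly x t N
  rw [← hS, ← hS₁] at Seq
  have main : z ^ N ∣ S - G := by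
    refine pow_dvd_sub_of_catalytic_equation (σ := ι.comp π) X_prime ⟨(1 - z) ^ 3, ht⟩ zx
      (by rw [RingHom.comp_apply, πz, ιX]) ?_ ?_
    · rw [RingHom.comp_apply, ιπG]; exact Geq
    · rw [RingHom.comp_apply, ιπS]; exact Seq
  have hfin := (map_dvd π main).mul_right ((1 - X) ^ 3)
  rw [map_pow, πz] at hfin
  convert hfin using 1
  have hw3 : ((1 - X) * π w) ^ 3 = 1 := by rw [hπw, one_pow]
  have πG : π G = (1 - 2 * X) * π w ^ 3 := by simp [hG, πz, πu, πv, map_ofNat]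
  rw [map_sub, πS, πG, sub_mul, Finset.sum_mul]
  congr 1
  · exact Finset.sum_congr rfl fun n _ => by rw [mul_pow, ← pow_mul, pow_add]; ring
  · linear_combination -(1 - 2 * X) * hw3

end Tree0

/-- Chapoton. The number of intervals in the Tamari lattice on binary
trees with `n` nodes equals `2(4n+1)! / ((n+1)!(3n+2)!)`. -/
theorem tamari_interval_count (n : ℕ) :
    (Set.ncard {p : Tree0 × Tree0 |
        p.1.size = n ∧ p.2.size = n ∧ Tree0.tamariLE p.1 p.2}) *
      ((n + 1).factorial * (3 * n + 2).factorial)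
      = 2 * (4 * n + 1).factorial := by
  have h := eq_chapoton_of_X_pow_dvd Tree0.X_pow_dvd_sum_spinePoly n
  rw [Tree0.eval_one_spinePoly, chapoton, eq_div_iff (by positivity)] at h
  rw [Set.ncard_eq_toFinset_card _ (Tree0.finite_intervals n)]
  exact_mod_cast h
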